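/- Let λ ∈ ℂ and let u ∈ C^∞[0,1] be a nontrivial solution of the eigenvalue equation −(1−ρ²)u''(ρ) − (2(1−ρ²)/ρ)u'(ρ) + 2λρu'(ρ) + (V(ρ)/ρ²)u(ρ) + λ(λ+1)u(ρ) = 0 on (0,1), where V(ρ) = 2(1−6ρ²+ρ⁴)/(1+ρ²)². Then either λ = 1 and u(ρ) = c·ρ/(1+ρ²) for some nonzero constant c ∈ ℂ, or the dual eigenvalue equation −(1−ρ²)v''(ρ) − (2(1−ρ²)/ρ)v'(ρ) + 2λρv'(ρ) + (Ṽ(ρ)/ρ²)v(ρ) + λ(λ+1)v(ρ) = 0, with Ṽ(ρ) = (6−2ρ²)/(1+ρ²), has a nontrivial solution v ∈ C^∞[0,1]. -/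

import Mathlib

/-- The potential `V(ρ) = 2(1−6ρ²+ρ⁴)/(1+ρ²)²`. -/
noncomputable def Vpot (ρ : ℝ) : ℝ := 2 * (1 - 6 * ρ ^ 2 + ρ ^ 4) / (1 + ρ ^ 2) ^ 2

/-- The dual potential `Ṽ(ρ) = (6−2ρ²)/(1+ρ²)`. -/
noncomputable def Vdual (ρ : ℝ) : ℝ := (6 - 2 * ρ ^ 2) / (1 + ρ ^ 2)

/-!
Let `g = ρ/(1+ρ²)` be the gauge mode. Up to the factor `1 - ρ²`, the eigenvalue operator is
`(λ-1)² - BA` and the dual one is `(λ-1)² - AB`, where `A = (1-ρ²)∂ - λρ - 1/ρ + 4ρ/(1+ρ²)` and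
`B = (1-ρ²)∂ - λρ + 3/ρ - 4ρ/(1+ρ²)`. Hence `v = Au` solves the dual equation whenever `u` solves
the original one. The equation forces `u(0) = 0`, so `u/ρ` is smooth up to `ρ = 0` by Hadamard's
lemma, and therefore so is `v`. If `v = 0`, then `(λ-1)² u = BAu = 0`, so `λ = 1`; for `λ = 1` the
first-order equation `Au = 0` has only the multiples of `g` as solutions.
-/

open Set
open scoped ContDiff

lemma eqOn_Icc_of_eqOn_Ioo {α X : Type*} [LinearOrder α] [DenselyOrdered α] [TopologicalSpace α]
    [OrderTopology α] [TopologicalSpace X] [T2Space X] {f g : α → X} {a b : α} (hab : a ≠ b)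
    (hf : ContinuousOn f (Icc a b)) (hg : ContinuousOn g (Icc a b)) (hfg : EqOn f g (Ioo a b)) :
    EqOn f g (Icc a b) :=
  hfg.of_subset_closure hf hg Ioo_subset_Icc_self (closure_Ioo hab).ge

lemma differentiableAt_deriv_of_contDiffOn {𝕜 E : Type*} [NontriviallyNormedField 𝕜]
    [NormedAddCommGroup E] [NormedSpace 𝕜 E] {f : 𝕜 → E} {s : Set 𝕜} {x : 𝕜} (hs : IsOpen s)
    (hf : ContDiffOn 𝕜 2 f s) (hx : x ∈ s) : DifferentiableAt 𝕜 (deriv f) x :=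
  ((contDiffOn_succ_iff_deriv_of_isOpen (n := 1) hs).1 hf).2.2.differentiableOn one_ne_zero
    |>.differentiableAt (hs.mem_nhds hx)

section Hadamard

variable {E : Type*} [NormedAddCommGroup E] [NormedSpace ℝ E]

lemma hasDerivAt_intervalIntegral_of_continuous {F F' : ℝ → ℝ → E} {a b : ℝ}
    (hF : ∀ x, Continuous (F x)) (hF' : Continuous (Function.uncurry F'))
    (hderiv : ∀ x t, HasDerivAt (F · t) (F' x t) x) (x : ℝ) :
    HasDerivAt (fun x => ∫ t in a..b, F x t) (∫ t in a..b, F' x t) x := by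
  obtain ⟨C, hC⟩ := ((isCompact_closedBall x 1).prod isCompact_uIcc).exists_bound_of_continuousOn
    (f := Function.uncurry F') (s := Metric.closedBall x 1 ×ˢ uIcc a b) hF'.continuousOn
  refine (intervalIntegral.hasDerivAt_integral_of_dominated_loc_of_deriv_le (bound := fun _ => C)
    (Metric.closedBall_mem_nhds x one_pos) (.of_forall fun y => (hF y).aestronglyMeasurable)
    ((hF x).intervalIntegrable _ _) (hF'.uncurry_left x).aestronglyMeasurable
    (.of_forall fun t ht y hy => hC (y, t) ⟨hy, uIoc_subset_uIcc ht⟩)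
    intervalIntegrable_const (.of_forall fun t _ y _ => hderiv y t)).2

lemma contDiff_intervalIntegral_right {F : ℝ × ℝ → E} {n : ℕ} (hF : ContDiff ℝ n F) (a b : ℝ) :
    ContDiff ℝ n fun x => ∫ t in a..b, F (x, t) := by
  induction n generalizing F with
  | zero =>
    exact contDiff_zero.2 (intervalIntegral.continuous_parametric_intervalIntegral_of_continuous'
      (f := fun x t => F (x, t)) hF.continuous a b)
  | succ n ih =>
    push_cast at hF ⊢
    have hF₁ : ContDiff ℝ n fun p => fderiv ℝ F p (1, 0) :=
      (hF.fderiv_right le_rfl).clm_apply contDiff_const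
    have hderiv (x t : ℝ) : HasDerivAt (fun y => F (y, t)) (fderiv ℝ F (x, t) (1, 0)) x :=
      (hF.differentiable (by simp) (x, t)).hasFDerivAt.comp_hasDerivAt x
        ((hasDerivAt_id x).prodMk (hasDerivAt_const x t))
    have hderiv_integral (x : ℝ) : HasDerivAt (fun x => ∫ t in a..b, F (x, t))
        (∫ t in a..b, fderiv ℝ F (x, t) (1, 0)) x :=
      hasDerivAt_intervalIntegral_of_continuous (F := fun x t => F (x, t))
        (F' := fun x t => fderiv ℝ F (x, t) (1, 0))
        (fun x => hF.continuous.comp (Continuous.prodMk_right x)) hF₁.continuous hderiv x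
    refine contDiff_succ_iff_deriv.2
      ⟨fun x => (hderiv_integral x).differentiableAt, by simp, ?_⟩
    rw [funext fun x => (hderiv_integral x).deriv]
    exact ih hF₁

variable {f : ℝ → E} {a b : ℝ}

/-- The quotient `(f x - f a) / (x - a)` of Hadamard's lemma on `[a, b]`, written as the mean of
the derivative over `[a, x]` so that it also makes sense at `x = a`; one-sided derivatives are used
at the endpoints. -/
noncomputable def hadamardQuotient (f : ℝ → E) (a b x : ℝ) : E :=
  ∫ t in (0 : ℝ)..1, derivWithin f (Icc a b) (a + t • (x - a))

lemma hadamardQuotient_eq_of_eqOn {F : ℝ → E} (hab : a < b) (hF : Differentiable ℝ F)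
    (hFf : EqOn F f (Icc a b)) :
    EqOn (hadamardQuotient f a b) (fun x => ∫ t in (0 : ℝ)..1, deriv F (a + t • (x - a)))
      (Icc a b) := by
  intro x hx
  refine intervalIntegral.integral_congr fun t ht => ?_
  rw [uIcc_of_le zero_le_one] at ht
  have hmem : a + t • (x - a) ∈ Icc a b :=
    (convex_Icc a b).add_smul_sub_mem (left_mem_Icc.2 hab.le) hx ht
  rw [← derivWithin_congr hFf (hFf hmem), (hF _).derivWithin (uniqueDiffOn_Icc hab _ hmem)]

variable [CompleteSpace E]

lemma exists_contDiff_eqOn_Icc {n : ℕ} (hab : a < b)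
    (hf : ContDiffOn ℝ n f (Icc a b)) : ∃ F : ℝ → E, ContDiff ℝ n F ∧ EqOn F f (Icc a b) := by
  induction n generalizing f with
  | zero =>
    refine ⟨IccExtend hab.le ((Icc a b).domRestrict f), ?_, fun x hx => ?_⟩
    · exact contDiff_zero.2 (continuousOn_iff_continuous_domRestrict.1 hf.continuousOn).Icc_extend'
    · rw [IccExtend_of_mem _ _ hx, domRestrict_apply]
  | succ n ih =>
    push_cast at hf ⊢
    obtain ⟨hdiff, -, hf'⟩ := (contDiffOn_succ_iff_derivWithin (uniqueDiffOn_Icc hab)).1 hf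
    obtain ⟨G, hG, hGf⟩ := ih hf'
    have hderiv (x : ℝ) : HasDerivAt (fun x => f a + ∫ t in a..x, G t) (G x) x :=
      (intervalIntegral.integral_hasDerivAt_right (hG.continuous.intervalIntegrable _ _)
        (hG.continuous.stronglyMeasurableAtFilter _ _) hG.continuous.continuousAt).const_add _
    refine ⟨fun x => f a + ∫ t in a..x, G t, ?_, fun x hx => ?_⟩
    · refine contDiff_succ_iff_deriv.2 ⟨fun x => (hderiv x).differentiableAt, by simp, ?_⟩
      rwa [funext fun x => (hderiv x).deriv]
    · have hftc : ∫ t in a..x, G t = f x - f a := by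
        refine intervalIntegral.integral_eq_sub_of_hasDerivAt_of_le hx.1
          (hf.continuousOn.mono (Icc_subset_Icc_right hx.2)) (fun y hy => ?_)
          (hG.continuous.intervalIntegrable _ _)
        have hy' : y ∈ Icc a b := ⟨hy.1.le, hy.2.le.trans hx.2⟩
        rw [hGf hy']
        exact (hdiff y hy').hasDerivWithinAt.hasDerivAt (Icc_mem_nhds hy.1 (hy.2.trans_le hx.2))
      simp only [hftc, add_sub_cancel]

lemma contDiffOn_hadamardQuotient {n : ℕ} (hab : a < b) (hf : ContDiffOn ℝ (n + 1) f (Icc a b)) :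
    ContDiffOn ℝ n (hadamardQuotient f a b) (Icc a b) := by
  obtain ⟨F, hF, hFf⟩ := exists_contDiff_eqOn_Icc (n := n + 1) hab (mod_cast hf)
  obtain ⟨hdiff, -, hF'⟩ := contDiff_succ_iff_deriv.1 (mod_cast hF : ContDiff ℝ (n + 1) F)
  refine ContDiffOn.congr ?_ (hadamardQuotient_eq_of_eqOn hab hdiff hFf)
  exact (contDiff_intervalIntegral_right (F := fun p => deriv F (a + p.2 • (p.1 - a)))
    (hF'.comp (by fun_prop)) 0 1).contDiffOn

lemma sub_smul_hadamardQuotient (hab : a < b) (hf : ContDiffOn ℝ 1 f (Icc a b)) {x : ℝ}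
    (hx : x ∈ Icc a b) : (x - a) • hadamardQuotient f a b x = f x - f a := by
  obtain ⟨F, hF, hFf⟩ := exists_contDiff_eqOn_Icc (n := 1) hab (mod_cast hf)
  have hF : ContDiff ℝ 1 F := mod_cast hF
  have hcont : Continuous fun t : ℝ => deriv F (a + t • (x - a)) :=
    (hF.continuous_deriv le_rfl).comp (by fun_prop)
  rw [hadamardQuotient_eq_of_eqOn hab (hF.differentiable (by simp)) hFf hx,
    intervalIntegral.integral_unitInterval_deriv_eq_sub hcont.continuousOn
      fun t _ => (hF.differentiable (by simp) _).hasDerivAt,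
    add_sub_cancel, hFf hx, hFf (left_mem_Icc.2 hab.le)]

end Hadamard

section FirstOrder

variable {𝕜 : Type*} [NontriviallyNormedField 𝕜] [NormedAlgebra ℝ 𝕜] {p a b u v : ℝ → 𝕜}
  {p' a' : 𝕜} {s : Set ℝ} {x : ℝ}

/-- The first-order differential operator `p ∂ + a`. -/
noncomputable def firstOrderOp (p a u : ℝ → 𝕜) (x : ℝ) : 𝕜 := p x * deriv u x + a x * u x

lemma firstOrderOp_eqOn (hs : IsOpen s) (huv : EqOn u v s) :
    EqOn (firstOrderOp p a u) (firstOrderOp p a v) s := fun x hx => by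
  simp only [firstOrderOp, huv hx, huv.deriv hs hx]

lemma firstOrderOp_zero : firstOrderOp p a 0 = 0 := by
  ext x
  simp [firstOrderOp]

lemma firstOrderOp_const_mul (c : 𝕜) :
    firstOrderOp p a (fun x => c * u x) x = c * firstOrderOp p a u x := by
  simp only [firstOrderOp, deriv_const_mul_field]
  ring

lemma firstOrderOp_firstOrderOp (hp : HasDerivAt p p' x) (ha : HasDerivAt a a' x)
    (hu : DifferentiableAt ℝ u x) (hu' : DifferentiableAt ℝ (deriv u) x) :
    firstOrderOp p b (firstOrderOp p a u) x =
      p x ^ 2 * deriv (deriv u) x + p x * (p' + a x + b x) * deriv u x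
        + (p x * a' + a x * b x) * u x := by
  have hderiv : deriv (firstOrderOp p a u) x =
      p' * deriv u x + p x * deriv (deriv u) x + (a' * u x + a x * deriv u x) :=
    ((hp.mul hu'.hasDerivAt).add (ha.mul hu.hasDerivAt)).deriv
  rw [firstOrderOp, hderiv, firstOrderOp]
  ring

lemma exists_eqOn_const_mul_of_firstOrderOp_eq_zero (hs : IsOpen s) (hs' : IsPreconnected s)
    (hp : ∀ x ∈ s, p x ≠ 0) (hu : DifferentiableOn ℝ u s) (hv : DifferentiableOn ℝ v s)
    (hv₀ : ∀ x ∈ s, v x ≠ 0) (hLu : EqOn (firstOrderOp p a u) 0 s)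
    (hLv : EqOn (firstOrderOp p a v) 0 s) : ∃ c : 𝕜, EqOn u (fun x => c * v x) s := by
  have hquot : EqOn (deriv (u / v)) 0 s := fun x hx => by
    have hux := hu.differentiableAt (hs.mem_nhds hx)
    have hvx := hv.differentiableAt (hs.mem_nhds hx)
    have hwronskian : deriv u x * v x - u x * deriv v x = 0 := by
      have hLux : p x * deriv u x + a x * u x = 0 := hLu hx
      have hLvx : p x * deriv v x + a x * v x = 0 := hLv hx
      refine (mul_eq_zero.1 ?_).resolve_left (hp x hx)
      linear_combination v x * hLux - u x * hLvx
    rw [deriv_div hux hvx (hv₀ x hx), hwronskian, zero_div, Pi.zero_apply]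
  obtain ⟨c, hc⟩ := hs.exists_is_const_of_deriv_eq_zero hs' (hu.div hv hv₀) hquot
  exact ⟨c, fun x hx => (div_eq_iff (hv₀ x hx)).1 (hc x hx)⟩

end FirstOrder

section EigenOperator

/-- The left-hand side of the eigenvalue equation with a general potential `W` in place of `V`. -/
noncomputable def eigenOp (W : ℝ → ℝ) (lam : ℂ) (u : ℝ → ℂ) (ρ : ℝ) : ℂ :=
  -(1 - (ρ : ℂ) ^ 2) * deriv (deriv u) ρ
    - (2 * (1 - (ρ : ℂ) ^ 2) / (ρ : ℂ)) * deriv u ρ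
    + 2 * lam * (ρ : ℂ) * deriv u ρ
    + (((W ρ : ℝ) : ℂ) / (ρ : ℂ) ^ 2) * u ρ
    + lam * (lam + 1) * u ρ

/-- The first-order coefficient `-λρ + c/ρ + dρ/(1+ρ²)`, a family containing the zeroth-order terms
of both factors of the eigenvalue operator. -/
noncomputable def factorCoeff (lam c d : ℂ) (ρ : ℝ) : ℂ :=
  -lam * ρ + c / ρ + d * (ρ / (1 + (ρ : ℂ) ^ 2))

/-- The Darboux transformation `(1-ρ²)∂ - λρ - 1/ρ + 4ρ/(1+ρ²)`, which carries solutions of the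
eigenvalue equation to solutions of the dual one. With `g = ρ/(1+ρ²)` the gauge mode, its
coefficient is `-(1-ρ²)g'/g + (1-λ)ρ`, so that it annihilates `g` when `λ = 1`. -/
noncomputable def darboux (lam : ℂ) : (ℝ → ℂ) → ℝ → ℂ :=
  firstOrderOp (fun ρ => 1 - (ρ : ℂ) ^ 2) (factorCoeff lam (-1) 4)

/-- The transformation in the opposite direction, from the dual eigenvalue equation to the original
one. -/
noncomputable def dualDarboux (lam : ℂ) : (ℝ → ℂ) → ℝ → ℂ :=
  firstOrderOp (fun ρ => 1 - (ρ : ℂ) ^ 2) (factorCoeff lam 3 (-4))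

variable {W : ℝ → ℝ} {lam : ℂ} {u : ℝ → ℂ} {ρ : ℝ}

lemma one_add_ofReal_sq_ne_zero (ρ : ℝ) : 1 + (ρ : ℂ) ^ 2 ≠ 0 := by
  exact_mod_cast (by positivity : 1 + ρ ^ 2 ≠ 0)

lemma one_sub_ofReal_sq_ne_zero (hρ : ρ ∈ Ioo (0 : ℝ) 1) : 1 - (ρ : ℂ) ^ 2 ≠ 0 := by
  exact_mod_cast (by nlinarith [hρ.1, hρ.2] : 1 - ρ ^ 2 ≠ 0)

lemma hasDerivAt_one_sub_ofReal_sq (ρ : ℝ) :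
    HasDerivAt (fun x : ℝ => 1 - (x : ℂ) ^ 2) (-(2 * (ρ : ℂ))) ρ := by
  simpa using ((hasDerivAt_id (ρ : ℂ)).pow 2).const_sub 1 |>.comp_ofReal

lemma hasDerivAt_ofReal_div_one_add_sq (ρ : ℝ) :
    HasDerivAt (fun x : ℝ => (x : ℂ) / (1 + (x : ℂ) ^ 2))
      ((1 - (ρ : ℂ) ^ 2) / (1 + (ρ : ℂ) ^ 2) ^ 2) ρ := by
  have hid := hasDerivAt_id (ρ : ℂ)
  refine (hid.div ((hid.pow 2).const_add 1) (one_add_ofReal_sq_ne_zero ρ)).comp_ofReal.congr_deriv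
    ?_
  simp only [id, Pi.pow_apply]
  ring

lemma hasDerivAt_factorCoeff (c d : ℂ) (hρ : ρ ≠ 0) :
    HasDerivAt (factorCoeff lam c d)
      (-lam - c / (ρ : ℂ) ^ 2 + d * ((1 - (ρ : ℂ) ^ 2) / (1 + (ρ : ℂ) ^ 2) ^ 2)) ρ := by
  have hid : HasDerivAt (fun x : ℝ => (x : ℂ)) 1 ρ := (hasDerivAt_id (ρ : ℂ)).comp_ofReal
  refine (((hid.const_mul (-lam)).add
    ((hasDerivAt_const ρ c).div hid (Complex.ofReal_ne_zero.2 hρ))).add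
    ((hasDerivAt_ofReal_div_one_add_sq ρ).const_mul d)).congr_deriv ?_
  ring

lemma firstOrderOp_firstOrderOp_eq_sub_eigenOp {a b : ℝ → ℂ} {a' : ℂ} (hρ : ρ ≠ 0)
    (ha : HasDerivAt a a' ρ) (hsum : a ρ + b ρ = 2 / ρ - 2 * lam * ρ)
    (hzeroth : (1 - (ρ : ℂ) ^ 2) * a' + a ρ * b ρ =
      (lam - 1) ^ 2 - (1 - (ρ : ℂ) ^ 2) * (W ρ / (ρ : ℂ) ^ 2 + lam * (lam + 1)))
    (hu : DifferentiableAt ℝ u ρ) (hu' : DifferentiableAt ℝ (deriv u) ρ) :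
    firstOrderOp (fun x => 1 - (x : ℂ) ^ 2) b (firstOrderOp (fun x => 1 - (x : ℂ) ^ 2) a u) ρ =
      (lam - 1) ^ 2 * u ρ - (1 - (ρ : ℂ) ^ 2) * eigenOp W lam u ρ := by
  have hfirst : -(2 * (ρ : ℂ)) + a ρ + b ρ = 2 * (1 - (ρ : ℂ) ^ 2) / ρ - 2 * lam * ρ := by
    rw [add_assoc, hsum]
    have := Complex.ofReal_ne_zero.2 hρ
    field_simp
    ring
  rw [firstOrderOp_firstOrderOp (hasDerivAt_one_sub_ofReal_sq ρ) ha hu hu', hfirst, hzeroth,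
    eigenOp]
  ring

lemma dualDarboux_darboux (hρ : ρ ≠ 0) (hu : DifferentiableAt ℝ u ρ)
    (hu' : DifferentiableAt ℝ (deriv u) ρ) :
    dualDarboux lam (darboux lam u) ρ =
      (lam - 1) ^ 2 * u ρ - (1 - (ρ : ℂ) ^ 2) * eigenOp Vpot lam u ρ := by
  have hρ' := Complex.ofReal_ne_zero.2 hρ
  have := one_add_ofReal_sq_ne_zero ρ
  refine firstOrderOp_firstOrderOp_eq_sub_eigenOp hρ (hasDerivAt_factorCoeff _ _ hρ) ?_ ?_ hu hu'
  · simp only [factorCoeff]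
    ring
  · simp only [factorCoeff, Vpot]
    push_cast
    field_simp
    ring

lemma darboux_dualDarboux (hρ : ρ ≠ 0) (hu : DifferentiableAt ℝ u ρ)
    (hu' : DifferentiableAt ℝ (deriv u) ρ) :
    darboux lam (dualDarboux lam u) ρ =
      (lam - 1) ^ 2 * u ρ - (1 - (ρ : ℂ) ^ 2) * eigenOp Vdual lam u ρ := by
  have hρ' := Complex.ofReal_ne_zero.2 hρ
  have := one_add_ofReal_sq_ne_zero ρ
  refine firstOrderOp_firstOrderOp_eq_sub_eigenOp hρ (hasDerivAt_factorCoeff _ _ hρ) ?_ ?_ hu hu'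
  · simp only [factorCoeff]
    ring
  · simp only [factorCoeff, Vdual]
    push_cast
    field_simp
    ring

lemma darboux_gaugeMode (hρ : ρ ≠ 0) :
    darboux 1 (fun x => (x : ℂ) / (1 + (x : ℂ) ^ 2)) ρ = 0 := by
  have hρ' := Complex.ofReal_ne_zero.2 hρ
  have := one_add_ofReal_sq_ne_zero ρ
  rw [darboux, firstOrderOp, (hasDerivAt_ofReal_div_one_add_sq ρ).deriv, factorCoeff]
  field_simp
  ring

lemma continuous_Vpot : Continuous Vpot := by
  unfold Vpot
  exact .div (by fun_prop) (by fun_prop) fun ρ => by positivity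

-- Multiplied by `ρ²`, the equation extends continuously to `ρ = 0`, where it reads `W(0) u(0) = 0`.
lemma eq_zero_of_eigenOp_eq_zero (hW : ContinuousOn W (Icc 0 1)) (hW₀ : W 0 ≠ 0)
    (hu : ContDiffOn ℝ 2 u (Icc 0 1)) (heq : ∀ ρ ∈ Ioo (0 : ℝ) 1, eigenOp W lam u ρ = 0) :
    u 0 = 0 := by
  set u₁ := derivWithin u (Icc 0 1)
  set u₂ := derivWithin u₁ (Icc 0 1)
  have hI : UniqueDiffOn ℝ (Icc (0 : ℝ) 1) := uniqueDiffOn_Icc zero_lt_one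
  have hu₁ : ContDiffOn ℝ 1 u₁ (Icc 0 1) := hu.derivWithin hI (by norm_num)
  have hderiv : EqOn (deriv u) u₁ (Ioo 0 1) := fun x hx =>
    (derivWithin_of_mem_nhds (Icc_mem_nhds hx.1 hx.2)).symm
  have hderiv₂ : EqOn (deriv (deriv u)) u₂ (Ioo 0 1) := fun x hx => by
    rw [hderiv.deriv isOpen_Ioo hx]
    exact (derivWithin_of_mem_nhds (Icc_mem_nhds hx.1 hx.2)).symm
  have hext : EqOn (fun x : ℝ => -(x : ℂ) ^ 2 * (1 - (x : ℂ) ^ 2) * u₂ x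
      - 2 * x * (1 - (x : ℂ) ^ 2) * u₁ x + 2 * lam * (x : ℂ) ^ 3 * u₁ x + W x * u x
      + (x : ℂ) ^ 2 * (lam * (lam + 1)) * u x) 0 (Icc 0 1) := by
    have hc := hu.continuousOn
    have hc₁ := hu₁.continuousOn
    have hc₂ := (hu₁.derivWithin hI (m := 0) (by norm_num)).continuousOn
    refine eqOn_Icc_of_eqOn_Ioo zero_ne_one (by fun_prop) continuousOn_const fun x hx => ?_
    have hx₀ : (x : ℂ) ≠ 0 := Complex.ofReal_ne_zero.2 hx.1.ne'
    have hmul : (x : ℂ) ^ 2 * eigenOp W lam u x = 0 := by rw [heq x hx, mul_zero]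
    rw [eigenOp, hderiv hx, hderiv₂ hx] at hmul
    rw [Pi.zero_apply, ← hmul]
    field_simp
  simpa [hW₀] using hext (left_mem_Icc.2 zero_le_one)

lemma exists_contDiffOn_eqOn_darboux (lam : ℂ) (hu : ContDiffOn ℝ ∞ u (Icc 0 1)) (hu₀ : u 0 = 0) :
    ∃ v : ℝ → ℂ, ContDiffOn ℝ ∞ v (Icc 0 1) ∧ EqOn v (darboux lam u) (Ioo 0 1) := by
  have hu' := ((contDiffOn_infty_iff_derivWithin (uniqueDiffOn_Icc zero_lt_one)).1 hu).2
  have hq : ContDiffOn ℝ ∞ (hadamardQuotient u 0 1) (Icc 0 1) :=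
    contDiffOn_infty.2 fun n =>
      contDiffOn_hadamardQuotient zero_lt_one (hu.of_le (mod_cast le_top))
  have hofReal : ContDiff ℝ ∞ fun x : ℝ => (x : ℂ) := Complex.ofRealCLM.contDiff
  have hregular : ContDiff ℝ ∞ fun x : ℝ => -lam * (x : ℂ) + 4 * ((x : ℂ) / (1 + (x : ℂ) ^ 2)) := by
    simp only [div_eq_mul_inv]
    exact (contDiff_const.mul hofReal).add (contDiff_const.mul
      (hofReal.mul ((contDiff_const.add (hofReal.pow 2)).inv one_add_ofReal_sq_ne_zero)))
  refine ⟨fun x => (1 - (x : ℂ) ^ 2) * derivWithin u (Icc 0 1) x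
      + (-lam * x + 4 * (x / (1 + (x : ℂ) ^ 2))) * u x - hadamardQuotient u 0 1 x,
    (((contDiff_const.sub (hofReal.pow 2)).contDiffOn.mul hu').add
      (hregular.contDiffOn.mul hu)).sub hq, fun x hx => ?_⟩
  have hx₀ : (x : ℂ) ≠ 0 := Complex.ofReal_ne_zero.2 hx.1.ne'
  have hquot : (x : ℂ) * hadamardQuotient u 0 1 x = u x := by
    simpa [hu₀] using sub_smul_hadamardQuotient zero_lt_one (hu.of_le (mod_cast le_top))
      (Ioo_subset_Icc_self hx)
  simp only [darboux, firstOrderOp, factorCoeff]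
  rw [derivWithin_of_mem_nhds (Icc_mem_nhds hx.1 hx.2), ← hquot]
  field_simp
  ring

lemma dualDarboux_eqOn_of_eqOn_darboux {v : ℝ → ℂ} (hu : ContDiffOn ℝ 2 u (Ioo 0 1))
    (heq : ∀ ρ ∈ Ioo (0 : ℝ) 1, eigenOp Vpot lam u ρ = 0)
    (hvu : EqOn v (darboux lam u) (Ioo 0 1)) :
    EqOn (dualDarboux lam v) (fun x => (lam - 1) ^ 2 * u x) (Ioo 0 1) := fun x hx => by
  have hcongr : dualDarboux lam v x = dualDarboux lam (darboux lam u) x :=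
    firstOrderOp_eqOn isOpen_Ioo hvu hx
  rw [hcongr, dualDarboux_darboux hx.1.ne'
    ((hu.differentiableOn two_ne_zero).differentiableAt (isOpen_Ioo.mem_nhds hx))
    (differentiableAt_deriv_of_contDiffOn isOpen_Ioo hu hx), heq x hx, mul_zero, sub_zero]

lemma eigenOp_Vdual_eq_zero_of_eqOn_darboux {v : ℝ → ℂ} (hu : ContDiffOn ℝ 2 u (Ioo 0 1))
    (heq : ∀ ρ ∈ Ioo (0 : ℝ) 1, eigenOp Vpot lam u ρ = 0) (hv : ContDiffOn ℝ 2 v (Ioo 0 1))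
    (hvu : EqOn v (darboux lam u) (Ioo 0 1)) (hρ : ρ ∈ Ioo (0 : ℝ) 1) :
    eigenOp Vdual lam v ρ = 0 := by
  have htriple : darboux lam (dualDarboux lam v) ρ = (lam - 1) ^ 2 * v ρ :=
    calc darboux lam (dualDarboux lam v) ρ
        = darboux lam (fun x => (lam - 1) ^ 2 * u x) ρ :=
          firstOrderOp_eqOn isOpen_Ioo (dualDarboux_eqOn_of_eqOn_darboux hu heq hvu) hρ
      _ = (lam - 1) ^ 2 * darboux lam u ρ := firstOrderOp_const_mul _
      _ = (lam - 1) ^ 2 * v ρ := by rw [hvu hρ]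
  rw [darboux_dualDarboux hρ.1.ne'
    ((hv.differentiableOn two_ne_zero).differentiableAt (isOpen_Ioo.mem_nhds hρ))
    (differentiableAt_deriv_of_contDiffOn isOpen_Ioo hv hρ), sub_eq_self] at htriple
  exact (mul_eq_zero.1 htriple).resolve_left (one_sub_ofReal_sq_ne_zero hρ)

lemma eqOn_zero_of_darboux_eqOn_zero (hlam : lam ≠ 1) (hu : ContDiffOn ℝ 2 u (Ioo 0 1))
    (heq : ∀ ρ ∈ Ioo (0 : ℝ) 1, eigenOp Vpot lam u ρ = 0)
    (hdarboux : EqOn (darboux lam u) 0 (Ioo 0 1)) : EqOn u 0 (Ioo 0 1) := fun x hx => by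
  have hdual := dualDarboux_eqOn_of_eqOn_darboux hu heq hdarboux.symm hx
  rw [dualDarboux, firstOrderOp_zero, Pi.zero_apply] at hdual
  exact (mul_eq_zero.1 hdual.symm).resolve_left (pow_ne_zero 2 (sub_ne_zero.2 hlam))

lemma exists_eqOn_const_mul_gaugeMode (hu : DifferentiableOn ℝ u (Ioo 0 1))
    (hdarboux : EqOn (darboux 1 u) 0 (Ioo 0 1)) :
    ∃ c : ℂ, EqOn u (fun x => c * (x / (1 + (x : ℂ) ^ 2))) (Ioo 0 1) :=
  exists_eqOn_const_mul_of_firstOrderOp_eq_zero isOpen_Ioo isPreconnected_Ioo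
    (fun _ => one_sub_ofReal_sq_ne_zero) hu
    (fun x _ => (hasDerivAt_ofReal_div_one_add_sq x).differentiableAt.differentiableWithinAt)
    (fun x hx => div_ne_zero (Complex.ofReal_ne_zero.2 hx.1.ne') (one_add_ofReal_sq_ne_zero x))
    hdarboux fun _ hx => darboux_gaugeMode hx.1.ne'

end EigenOperator

/-- the dual eigenvalue problem: if `u ∈ C^∞[0,1]` is a nontrivial solution
of the eigenvalue equation with potential `V`, then either `λ = 1` and `u` is a multiple of
the gauge mode `ρ/(1+ρ²)`, or the dual eigenvalue equation with potential `Ṽ` has a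
nontrivial solution `v ∈ C^∞[0,1]`. -/
theorem stmt_11 (lam : ℂ) (u : ℝ → ℂ)
    (hu : ContDiffOn ℝ (⊤ : ℕ∞) u (Set.Icc 0 1))
    (hnontriv : ∃ ρ ∈ Set.Icc (0:ℝ) 1, u ρ ≠ 0)
    (hode : ∀ ρ ∈ Set.Ioo (0:ℝ) 1,
      -(1 - (ρ:ℂ) ^ 2) * deriv (deriv u) ρ
      - (2 * (1 - (ρ:ℂ) ^ 2) / (ρ:ℂ)) * deriv u ρ
      + 2 * lam * (ρ:ℂ) * deriv u ρ
      + (((Vpot ρ : ℝ) : ℂ) / (ρ:ℂ) ^ 2) * u ρ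
      + lam * (lam + 1) * u ρ = 0) :
    (lam = 1 ∧ ∃ c : ℂ, c ≠ 0 ∧ ∀ ρ ∈ Set.Icc (0:ℝ) 1,
      u ρ = c * ((ρ / (1 + ρ ^ 2) : ℝ) : ℂ)) ∨
    (∃ v : ℝ → ℂ, ContDiffOn ℝ (⊤ : ℕ∞) v (Set.Icc 0 1) ∧
      (∃ ρ ∈ Set.Icc (0:ℝ) 1, v ρ ≠ 0) ∧
      ∀ ρ ∈ Set.Ioo (0:ℝ) 1,
        -(1 - (ρ:ℂ) ^ 2) * deriv (deriv v) ρ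
        - (2 * (1 - (ρ:ℂ) ^ 2) / (ρ:ℂ)) * deriv v ρ
        + 2 * lam * (ρ:ℂ) * deriv v ρ
        + (((Vdual ρ : ℝ) : ℂ) / (ρ:ℂ) ^ 2) * v ρ
        + lam * (lam + 1) * v ρ = 0) := by
  have hu₀ : u 0 = 0 := eq_zero_of_eigenOp_eq_zero continuous_Vpot.continuousOn
    (by norm_num [Vpot]) (contDiffOn_infty.1 hu 2) hode
  have hu₂ : ContDiffOn ℝ 2 u (Ioo 0 1) := (contDiffOn_infty.1 hu 2).mono Ioo_subset_Icc_self
  obtain ⟨v, hv, hvu⟩ := exists_contDiffOn_eqOn_darboux lam hu hu₀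
  by_cases hv₀ : ∃ ρ ∈ Icc (0 : ℝ) 1, v ρ ≠ 0
  · exact Or.inr ⟨v, hv, hv₀, fun ρ hρ => eigenOp_Vdual_eq_zero_of_eqOn_darboux hu₂ hode
      ((contDiffOn_infty.1 hv 2).mono Ioo_subset_Icc_self) hvu hρ⟩
  left
  push Not at hv₀
  obtain ⟨ρ, hρ, huρ⟩ := hnontriv
  have hdarboux : EqOn (darboux lam u) 0 (Ioo 0 1) := fun x hx => by
    rw [← hvu hx, hv₀ x (Ioo_subset_Icc_self hx), Pi.zero_apply]
  obtain rfl : lam = 1 := by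
    by_contra hlam
    exact huρ (eqOn_Icc_of_eqOn_Ioo zero_ne_one hu.continuousOn continuousOn_const
      (eqOn_zero_of_darboux_eqOn_zero hlam hu₂ hode hdarboux) hρ)
  obtain ⟨c, hc⟩ :=
    exists_eqOn_const_mul_gaugeMode (hu₂.differentiableOn two_ne_zero) hdarboux
  have hc' := eqOn_Icc_of_eqOn_Ioo zero_ne_one hu.continuousOn (fun x _ =>
    ((hasDerivAt_ofReal_div_one_add_sq x).const_mul c).continuousAt.continuousWithinAt) hc
  exact ⟨rfl, c, fun h => huρ (by simp [hc' hρ, h]), fun x hx => by simp [hc' hx]⟩
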